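/- Let A : Matrix (Fin n) (Fin n) ℝ be a real orthogonal matrix (Aᵀ * A = 1) with det A = 1, let 0 ≤ k ≤ n, and let I, J : Fin k → Fin n be strictly monotone maps with strictly monotone complementary enumerations Iᶜ, Jᶜ : Fin (n−k) → Fin n (enumerating, in increasing order, the indices not in the range of I, resp. J). Then det (A.submatrix Iᶜ Jᶜ) = (−1)^{Σ_{a} I a + Σ_{a} J a} · det (A.submatrix I J), where the sums are over the natural-number values of the entries of I and J. -/

import Mathlib

/-!
List the rows of `A` in the order `I, Iᶜ`, the columns in the order `J, Jᶜ`, and list the rows and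
columns of `B = A⁻¹` correspondingly. The block product
`[P Q; R S] * [1 Q'; 0 S'] = [P 0; R 1]` then gives `det [P Q; R S] * det S' = det P`, where
`S'` is the complementary block of `B`.

It remains to compare `det [P Q; R S]` with `det A`, that is, to find the sign of the shuffle
listing `I, Iᶜ`. Each `I a` exceeds everything listed before it, so exactly `I a - a` smaller
values are listed after it; the entries of `Iᶜ` start no inversion. Hence the sign is
`(-1) ^ ∑ (I a + a)`, and the contributions `∑ a` of the row and column shuffles cancel.
-/

open Equiv Equiv.Perm Finset Matrix

lemma card_filter_Ioi_apply_lt_add_val {n : ℕ} (σ : Perm (Fin n)) {i : Fin n}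
    (hi : ∀ j < i, σ j < σ i) : #{j ∈ Ioi i | σ j < σ i} + (i : ℕ) = σ i := by
  have hdisj : Disjoint {j ∈ Ioi i | σ j < σ i} (Iio i) :=
    (disjoint_Ioi_Iio i).mono_left (filter_subset _ _)
  have hunion : {j ∈ Ioi i | σ j < σ i} ∪ Iio i = (Iio (σ i)).map σ.symm.toEmbedding := by
    ext j
    rcases lt_trichotomy j i with hj | rfl | hj
    · simp [hj, hi j hj]
    · simp
    · simp [hj, hj.not_gt]
  rw [← Fin.card_Iio i, ← card_union_of_disjoint hdisj, hunion, card_map, Fin.card_Iio]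

lemma prod_Ioi_ite_lt_eq_neg_one_pow {n : ℕ} (σ : Perm (Fin n)) {i : Fin n}
    (hi : ∀ j < i, σ j < σ i) :
    ∏ j ∈ Ioi i, (if σ i < σ j then 1 else -1 : ℤˣ) = (-1) ^ ((σ i : ℕ) + i) := by
  have hnot : {j ∈ Ioi i | ¬ σ i < σ j} = {j ∈ Ioi i | σ j < σ i} :=
    filter_congr fun j hj ↦ by
      rw [not_lt, (σ.injective.ne (mem_Ioi.1 hj).ne').le_iff_lt]
  rw [prod_ite, prod_const_one, one_mul, prod_const, hnot, ← card_filter_Ioi_apply_lt_add_val σ hi,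
    add_assoc, pow_add _ _ ((i : ℕ) + i), (Even.add_self (i : ℕ)).neg_one_pow, mul_one]

/-- A `(k, m)`-shuffle: a permutation of `Fin (k + m)`, read as the word `σ 0, σ 1, …`, whose first
`k` letters and last `m` letters are both increasing. -/
structure IsShuffle {k m : ℕ} (σ : Perm (Fin (k + m))) : Prop where
  strictMono_castAdd : StrictMono (σ ∘ Fin.castAdd m)
  strictMono_natAdd : StrictMono (σ ∘ Fin.natAdd k)

namespace IsShuffle

variable {k m : ℕ} {σ : Perm (Fin (k + m))}

lemma apply_lt_apply_castAdd (hσ : IsShuffle σ) (a : Fin k) :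
    ∀ j < Fin.castAdd m a, σ j < σ (Fin.castAdd m a) := by
  intro j hj
  induction j using Fin.addCases with
  | left b => exact hσ.strictMono_castAdd hj
  | right b =>
    simp only [Fin.lt_def, Fin.val_castAdd, Fin.val_natAdd] at hj
    lia

lemma apply_natAdd_lt_apply (hσ : IsShuffle σ) (b : Fin m) :
    ∀ j > Fin.natAdd k b, σ (Fin.natAdd k b) < σ j := by
  intro j hj
  induction j using Fin.addCases with
  | left a =>
    simp only [Fin.lt_def, Fin.val_castAdd, Fin.val_natAdd] at hj
    lia
  | right c => exact hσ.strictMono_natAdd ((Fin.natAdd_lt_natAdd_iff k).1 hj)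

lemma sign_eq (hσ : IsShuffle σ) :
    sign σ = (-1) ^ (∑ a : Fin k, (σ (Fin.castAdd m a) : ℕ) + ∑ a : Fin k, (a : ℕ)) := by
  have hleft (a : Fin k) := prod_Ioi_ite_lt_eq_neg_one_pow σ (hσ.apply_lt_apply_castAdd a)
  have hright (b : Fin m) : ∏ j ∈ Ioi (Fin.natAdd k b),
      (if σ (Fin.natAdd k b) < σ j then 1 else -1 : ℤˣ) = 1 :=
    prod_eq_one fun j hj ↦ if_pos (hσ.apply_natAdd_lt_apply b j (mem_Ioi.1 hj))
  rw [sign_eq_prod_prod_Ioi, Fin.prod_univ_add]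
  simp only [hleft, hright, prod_const_one, mul_one, prod_pow_eq_pow_sum, sum_add_distrib,
    Fin.val_castAdd]

lemma sign_mul_sign {τ : Perm (Fin (k + m))} (hσ : IsShuffle σ) (hτ : IsShuffle τ) :
    sign σ * sign τ = (-1) ^ (∑ a : Fin k, (σ (Fin.castAdd m a) : ℕ)
      + ∑ a : Fin k, (τ (Fin.castAdd m a) : ℕ)) := by
  rw [hσ.sign_eq, hτ.sign_eq, ← pow_add, add_add_add_comm, pow_add,
    (Even.add_self (∑ a : Fin k, (a : ℕ))).neg_one_pow, mul_one]

end IsShuffle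

lemma append_bijective {α : Type*} {k m : ℕ} {u : Fin k → α} {v : Fin m → α}
    (hu : u.Injective) (hv : v.Injective) (huv : Set.range v = (Set.range u)ᶜ) :
    (Fin.append u v).Bijective := by
  refine ⟨Fin.append_injective_iff.2 ⟨hu, hv, fun a b hab ↦ ?_⟩, fun x ↦ ?_⟩
  · exact (huv ▸ Set.mem_range_self b : v b ∈ (Set.range u)ᶜ) ⟨a, hab⟩
  · by_cases hx : x ∈ Set.range u
    · obtain ⟨a, rfl⟩ := hx
      exact ⟨Fin.castAdd m a, Fin.append_left u v a⟩
    · obtain ⟨b, rfl⟩ : x ∈ Set.range v := huv ▸ hx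
      exact ⟨Fin.natAdd k b, Fin.append_right u v b⟩

lemma exists_isShuffle {k m : ℕ} {I : Fin k → Fin (k + m)} {Ic : Fin m → Fin (k + m)}
    (hI : StrictMono I) (hIc : StrictMono Ic) (hcompl : Set.range Ic = (Set.range I)ᶜ) :
    ∃ σ : Perm (Fin (k + m)), IsShuffle σ ∧ σ ∘ Fin.castAdd m = I ∧ σ ∘ Fin.natAdd k = Ic := by
  let σ := Equiv.ofBijective _ (append_bijective hI.injective hIc.injective hcompl)
  have hleft : σ ∘ Fin.castAdd m = I := funext (Fin.append_left I Ic)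
  have hright : σ ∘ Fin.natAdd k = Ic := funext (Fin.append_right I Ic)
  exact ⟨σ, ⟨hleft ▸ hI, hright ▸ hIc⟩, hleft, hright⟩

section Determinants

variable {R p q ι : Type*} [CommRing R] [Fintype p] [Fintype q] [Fintype ι] [DecidableEq p]
  [DecidableEq q] [DecidableEq ι]

lemma det_mul_det_toBlocks₂₂_of_mul_eq_one {M N : Matrix (p ⊕ q) (p ⊕ q) R} (hMN : M * N = 1) :
    M.det * N.toBlocks₂₂.det = M.toBlocks₁₁.det := by
  have hblocks := hMN
  rw [← fromBlocks_toBlocks M, ← fromBlocks_toBlocks N, fromBlocks_multiply, ← fromBlocks_one,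
    fromBlocks_inj] at hblocks
  obtain ⟨-, h₁₂, -, h₂₂⟩ := hblocks
  have hmul : M * fromBlocks 1 N.toBlocks₁₂ 0 N.toBlocks₂₂
      = fromBlocks M.toBlocks₁₁ 0 M.toBlocks₂₁ 1 := by
    conv_lhs => rw [← fromBlocks_toBlocks M]
    simp [fromBlocks_multiply, h₁₂, h₂₂]
  simpa using congrArg det hmul

lemma det_submatrix_perm (A : Matrix ι ι R) (σ τ : Perm ι) :
    (A.submatrix σ τ).det = ((sign σ * sign τ : ℤˣ) : ℤ) * A.det := by
  have hfactor : A.submatrix σ τ = (A.submatrix id τ).submatrix σ id := rfl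
  rw [hfactor, det_permute, det_permute', ← mul_assoc, Units.val_mul, Int.cast_mul]

lemma IsShuffle.det_submatrix {k m : ℕ} {σ τ : Perm (Fin (k + m))} (hσ : IsShuffle σ)
    (hτ : IsShuffle τ) (A : Matrix (Fin (k + m)) (Fin (k + m)) R) :
    (A.submatrix σ τ).det = (-1) ^ (∑ a : Fin k, (σ (Fin.castAdd m a) : ℕ)
      + ∑ a : Fin k, (τ (Fin.castAdd m a) : ℕ)) * A.det := by
  rw [det_submatrix_perm, hσ.sign_mul_sign hτ]
  simp

lemma det_submatrix_mul_det_submatrix_inr {A B : Matrix ι ι R} (hAB : A * B = 1)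
    (e f : p ⊕ q ≃ ι) :
    (A.submatrix e f).det * (B.submatrix (f ∘ Sum.inr) (e ∘ Sum.inr)).det
      = (A.submatrix (e ∘ Sum.inl) (f ∘ Sum.inl)).det :=
  det_mul_det_toBlocks₂₂_of_mul_eq_one (M := A.submatrix e f) (N := B.submatrix f e) <| by
    rw [submatrix_mul_equiv, hAB, submatrix_one_equiv]

/-- **Jacobi's complementary minor identity.** -/
theorem orthogonal_complementary_minor_general {n k m : ℕ} {A B : Matrix (Fin n) (Fin n) R}
    (hAB : A * B = 1) {I J : Fin k → Fin n} (hI : StrictMono I) (hJ : StrictMono J)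
    {Ic Jc : Fin m → Fin n} (hIc : StrictMono Ic) (hJc : StrictMono Jc)
    (hIcompl : Set.range Ic = (Set.range I)ᶜ) (hJcompl : Set.range Jc = (Set.range J)ᶜ) :
    A.det * (B.submatrix Jc Ic).det
      = (-1) ^ (∑ a, (I a : ℕ) + ∑ a, (J a : ℕ)) * (A.submatrix I J).det := by
  obtain rfl : k + m = n := by
    simpa using Fintype.card_of_bijective (append_bijective hI.injective hIc.injective hIcompl)
  obtain ⟨σ, hσ, rfl, rfl⟩ := exists_isShuffle hI hIc hIcompl
  obtain ⟨τ, hτ, rfl, rfl⟩ := exists_isShuffle hJ hJc hJcompl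
  have hminor : (A.submatrix σ τ).det * (B.submatrix (τ ∘ Fin.natAdd k) (σ ∘ Fin.natAdd k)).det
      = (A.submatrix (σ ∘ Fin.castAdd m) (τ ∘ Fin.castAdd m)).det := by
    rw [← det_submatrix_equiv_self finSumFinEquiv (A.submatrix σ τ)]
    exact det_submatrix_mul_det_submatrix_inr hAB (finSumFinEquiv.trans σ)
      (finSumFinEquiv.trans τ)
  rw [← hminor, hσ.det_submatrix hτ, ← mul_assoc, ← mul_assoc]
  simp only [Function.comp_apply, ← mul_pow, neg_one_mul, neg_neg, one_pow, one_mul]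

end Determinants

open Matrix in

/-- **Particle–hole symmetry of minors of a special orthogonal matrix.**
For a real orthogonal matrix `A` with `det A = 1`, the complementary minor on rows `Iᶜ` and
columns `Jᶜ` equals, up to the sign `(−1)^{Σ I + Σ J}`, the minor on rows `I` and columns
`J`, where `I, J` are strictly monotone and `Iᶜ, Jᶜ` are the strictly monotone enumerations
of the complementary index sets. -/
theorem orthogonal_complementary_minor {n k : ℕ} (hk : k ≤ n)
    (A : Matrix (Fin n) (Fin n) ℝ) (hA : Aᵀ * A = 1) (hdet : A.det = 1)
    (I J : Fin k → Fin n) (hI : StrictMono I) (hJ : StrictMono J)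
    (Ic Jc : Fin (n - k) → Fin n) (hIc : StrictMono Ic) (hJc : StrictMono Jc)
    (hIcompl : ∀ x : Fin n, x ∈ Set.range Ic ↔ x ∉ Set.range I)
    (hJcompl : ∀ x : Fin n, x ∈ Set.range Jc ↔ x ∉ Set.range J) :
    (A.submatrix Ic Jc).det
      = (-1 : ℝ) ^ ((∑ a : Fin k, (I a : ℕ)) + ∑ a : Fin k, (J a : ℕ))
        * (A.submatrix I J).det := by
  rw [← orthogonal_complementary_minor_general (mul_eq_one_comm.1 hA) hI hJ hIc hJc
    (Set.ext hIcompl) (Set.ext hJcompl), hdet, one_mul, ← transpose_submatrix, det_transpose]
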